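/- Let k be a field of characteristic 0, let a ∈ k be a non-square, and let K/k be a finite field extension such that a is not a square in K. Let F = K(α) with α² = a and L = k(α) ⊆ F, and let σ be the unique nontrivial K-algebra automorphism of F. Let ρ ∈ L be nonzero. For every commutative k-algebra B, write N₁ : (F ⊗_k B)^× → (L ⊗_k B)^× for the algebra norm of F ⊗_k B over L ⊗_k B and N₂ : (F ⊗_k B)^× → B^× for the algebra norm of F ⊗_k B over B, and let σ_B = σ ⊗ id_B act on F ⊗_k B. Then the map (t, w, y) ↦ ((t, (w·σ_B(w))⁻¹·y), w) is a bijection from the set {(t, w, y) ∈ B × (F ⊗_k B)^× × (F ⊗_k B)^× : N₂(w)·((1⊗t) − (α⊗1)) = (ρ⊗1)·N₁(y) in L ⊗_k B} onto the set {(t, x) ∈ B × (F ⊗_k B)^× : (1⊗t) − (α⊗1) = (ρ⊗1)·N₁(x) in L ⊗_k B} × (F ⊗_k B)^×, with inverse ((t, x), y) ↦ (t, y, x·y·σ_B(y)). (The isomorphism Y' ≅ T_U × R_{F/k}(G_m) in the non-split case of the proof of Proposition 4.1.) -/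

import Mathlib

open IntermediateField TensorProduct

attribute [local instance] Algebra.TensorProduct.rightAlgebra

/-- The algebra norm of `F ⊗_k B` over `L ⊗_k B`, for an intermediate field
`L` of `F/k` and a commutative `k`-algebra `B`; the `(L ⊗_k B)`-algebra structure
on `F ⊗_k B` is induced by the inclusion `L → F`. -/
noncomputable def normTensor (k F : Type) [Field k] [Field F] [Algebra k F]
    (L : IntermediateField k F) (B : Type) [CommRing B] [Algebra k B] :
    (F ⊗[k] B) →* (↥L ⊗[k] B) :=
  @Algebra.norm (↥L ⊗[k] B) (F ⊗[k] B) _ _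
    ((Algebra.TensorProduct.map L.val (AlgHom.id k B)).toRingHom).toAlgebra

lemma norm_quad_aux {R C : Type} [CommRing R] [CommRing C] [Algebra R C]
    (b : Module.Basis (Fin 2) R C) (a : R) (h0 : b 0 = 1) (h1 : b 1 * b 1 = algebraMap R C a)
    (τ : C →ₐ[R] C) (hτ : τ (b 1) = - b 1) (z : C) :
    algebraMap R C (Algebra.norm R z) = z * τ z := by
  have hz : z = b.repr z 0 • b 0 + b.repr z 1 • b 1 := by
    conv_lhs => rw [← b.sum_repr z]
    rw [Fin.sum_univ_two]
  generalize b.repr z 0 = x at hz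
  generalize b.repr z 1 = y at hz
  have e0 : z * b 0 = x • b 0 + y • b 1 := by rw [hz, h0]; simp
  have e1 : z * b 1 = (y * a) • b 0 + x • b 1 := by
    rw [hz, h0]
    simp only [Algebra.smul_def, map_mul]
    linear_combination (algebraMap R C y) * h1
  have hn : Algebra.norm R z = x * x - y * y * a := by
    rw [Algebra.norm_eq_matrix_det b, Matrix.det_fin_two]
    simp only [Algebra.leftMulMatrix_eq_repr_mul, e0, e1]
    simp
    ring
  rw [hn, hz, h0]
  simp only [Algebra.smul_def, map_mul, map_add, map_sub, hτ, AlgHom.commutes, map_one]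
  linear_combination (algebraMap R C y * algebraMap R C y) * h1

lemma cancel_aux {R : Type} [CommRing R] (n d r m y : R) (hn : IsUnit n) (h1 : n * m = y)
    (h2 : n * d = r * y) : d = r * m := by
  apply hn.mul_left_cancel
  rw [h2, ← h1]
  ring

lemma free_tensor_aux (k L F : Type) [Field k] [Field L] [Field F] [Algebra k F] [Algebra k L]
    [Algebra L F] [IsScalarTower k L F] (B : Type) [CommRing B] [Algebra k B]
    [Algebra (L ⊗[k] B) (F ⊗[k] B)]
    (h : ∀ l b, algebraMap (L ⊗[k] B) (F ⊗[k] B) (l ⊗ₜ[k] b) = algebraMap L F l ⊗ₜ[k] b) :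
    Module.Free (L ⊗[k] B) (F ⊗[k] B) := by
  let e : (L ⊗[k] B) ⊗[L] F ≃+ F ⊗[k] B :=
    ((TensorProduct.comm L (L ⊗[k] B) F).toAddEquiv).trans
      (TensorProduct.AlgebraTensorModule.cancelBaseChange k L L F B).toAddEquiv
  have he : ∀ (l : L) (b : B) (f : F), e ((l ⊗ₜ[k] b) ⊗ₜ[L] f) = (l • f) ⊗ₜ[k] b := by
    intro l b f
    simp [e]
  have hs : ∀ (c : L ⊗[k] B) (x : (L ⊗[k] B) ⊗[L] F), e (c • x) = c • e x := by
    intro c x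
    induction x with
    | zero => rw [smul_zero, map_zero, smul_zero]
    | add x y hx hy => rw [smul_add, map_add, map_add, smul_add, hx, hy]
    | tmul m f =>
      induction m with
      | zero => rw [TensorProduct.zero_tmul, smul_zero, map_zero, smul_zero]
      | add x y hx hy =>
        rw [TensorProduct.add_tmul, smul_add, map_add, map_add, smul_add, hx, hy]
      | tmul l b =>
        induction c with
        | zero => rw [zero_smul, map_zero, zero_smul]
        | add x y hx hy => rw [add_smul, map_add, add_smul, hx, hy]
        | tmul l' b' =>
          rw [TensorProduct.smul_tmul', smul_eq_mul, Algebra.TensorProduct.tmul_mul_tmul,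
            he, he, Algebra.smul_def (l' ⊗ₜ[k] b'), h, Algebra.TensorProduct.tmul_mul_tmul]
          simp [Algebra.smul_def, mul_assoc]
  let e' : (L ⊗[k] B) ⊗[L] F ≃ₗ[L ⊗[k] B] F ⊗[k] B :=
    { e with map_smul' := hs }
  exact Module.Free.of_equiv e'

lemma norm_key_aux (k L F : Type) [Field k] [Field L] [Field F] [Algebra k F] [Algebra k L]
    [Algebra L F] [IsScalarTower k L F] (B : Type) [CommRing B] [Algebra k B]
    [Algebra (L ⊗[k] B) (F ⊗[k] B)]
    (h : ∀ l b, algebraMap (L ⊗[k] B) (F ⊗[k] B) (l ⊗ₜ[k] b) = algebraMap L F l ⊗ₜ[k] b)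
    (a : k) (b0 : Module.Basis (Fin 2) k L) (b00 : b0 0 = 1)
    (hgg : b0 1 * b0 1 = algebraMap k L a)
    (σ : F ≃ₐ[k] F) (τ : L ≃ₐ[k] L) (hτ : ∀ x : L, algebraMap L F (τ x) = σ (algebraMap L F x))
    (hτg : τ (b0 1) = - b0 1) (w : F ⊗[k] B) :
    Algebra.norm (L ⊗[k] B) (w * (Algebra.TensorProduct.congr σ
              (AlgEquiv.refl (A₁ := B))) w) = (1 : L) ⊗ₜ[k] Algebra.norm B w := by
  let τB : L ⊗[k] B ≃ₐ[k] L ⊗[k] B :=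
    Algebra.TensorProduct.congr τ (AlgEquiv.refl (A₁ := B))
  let σB : F ⊗[k] B ≃ₐ[k] F ⊗[k] B :=
    Algebra.TensorProduct.congr σ (AlgEquiv.refl (A₁ := B))
  let τB' : L ⊗[k] B →ₐ[B] L ⊗[k] B :=
    { τB.toAlgHom.toRingHom with
      commutes' := by
        intro r
        change τB ((1 : L) ⊗ₜ[k] r) = (1 : L) ⊗ₜ[k] r
        simp [τB] }
  have : Module.Free (L ⊗[k] B) (F ⊗[k] B) := free_tensor_aux k L F B h
  have : IsScalarTower B (L ⊗[k] B) (F ⊗[k] B) := by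
    apply IsScalarTower.of_algebraMap_eq
    intro r
    change (1 : F) ⊗ₜ[k] r = algebraMap (L ⊗[k] B) (F ⊗[k] B) ((1 : L) ⊗ₜ[k] r)
    rw [h, map_one]
  let bB : Module.Basis (Fin 2) B (L ⊗[k] B) :=
    (Algebra.TensorProduct.basis B b0).map
      (Algebra.TensorProduct.commRight k B L).toLinearEquiv
  have bB0 : bB 0 = 1 := by simp [bB, b00, Algebra.TensorProduct.one_def]
  have bB1 : bB 1 = b0 1 ⊗ₜ[k] (1 : B) := by simp [bB]
  have : Module.Free B (L ⊗[k] B) := Module.Free.of_basis bB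
  have hconj : Algebra.norm (L ⊗[k] B) (σB w) = τB (Algebra.norm (L ⊗[k] B) w) := by
    have := Algebra.norm_eq_of_equiv_equiv (A₁ := L ⊗[k] B) (A₂ := L ⊗[k] B)
      (B₁ := F ⊗[k] B) (B₂ := F ⊗[k] B) τB.toRingEquiv σB.toRingEquiv (by
        apply RingHom.ext
        intro x
        change algebraMap (L ⊗[k] B) (F ⊗[k] B) (τB x) =
          σB (algebraMap (L ⊗[k] B) (F ⊗[k] B) x)
        induction x with
        | zero => simp
        | add x y hx hy => simp only [map_add, hx, hy]
        | tmul l b => simp [τB, σB, hτ, h]) w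
    have h2 := congrArg τB this
    rw [h2]
    exact (τB.apply_symm_apply _).symm
  have hq := norm_quad_aux bB (algebraMap k B a) bB0 (by
      rw [bB1, Algebra.TensorProduct.tmul_mul_tmul, hgg, mul_one]
      change _ = (1 : L) ⊗ₜ[k] (algebraMap k B a)
      rw [Algebra.algebraMap_eq_smul_one, Algebra.algebraMap_eq_smul_one,
        TensorProduct.smul_tmul]) τB' (by
      rw [bB1]
      change τB _ = _
      simp [τB, hτg, TensorProduct.neg_tmul]) (Algebra.norm (L ⊗[k] B) w)
  change Algebra.norm (L ⊗[k] B) (w * σB w) = _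
  rw [map_mul, hconj]
  change _ = _ * τB _ at hq
  rw [← hq]
  change (1 : L) ⊗ₜ[k] _ = _
  rw [Algebra.norm_norm]

lemma normTensor_key (k K F : Type) [Field k] [CharZero k] [Field K] [Field F]
    [Algebra k K] [Algebra K F] [Algebra k F] [IsScalarTower k K F]
    (a : k) (ha : ¬∃ x : k, x ^ 2 = a)
    (α : F) (hα : α ^ 2 = algebraMap k F a)
    (σ : F ≃ₐ[K] F) (hσ : σ α = -α)
    (B : Type) [CommRing B] [Algebra k B] (w : F ⊗[k] B) :
    normTensor k F k⟮α⟯ B (w * (Algebra.TensorProduct.congr (σ.restrictScalars k)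
              (AlgEquiv.refl (A₁ := B))) w) = (1 : ↥k⟮α⟯) ⊗ₜ[k] Algebra.norm B w := by
  have hint : IsIntegral k α :=
    ⟨Polynomial.X ^ 2 - Polynomial.C a, Polynomial.monic_X_pow_sub_C a two_ne_zero, by simp [hα]⟩
  have hirr : Irreducible (Polynomial.X ^ 2 - Polynomial.C a : Polynomial k) := by
    apply X_pow_sub_C_irreducible_of_prime Nat.prime_two
    intro b hb
    exact ha ⟨b, hb⟩
  have hmin : minpoly k α = Polynomial.X ^ 2 - Polynomial.C a :=
    (minpoly.eq_of_irreducible_of_monic hirr (by simp [hα])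
      (Polynomial.monic_X_pow_sub_C a two_ne_zero)).symm
  have : FiniteDimensional k k⟮α⟯ := adjoin.finiteDimensional hint
  have hdim : (adjoin.powerBasis hint).dim = 2 := by
    rw [adjoin.powerBasis_dim, hmin, Polynomial.natDegree_X_pow_sub_C]
  let b0 : Module.Basis (Fin 2) k k⟮α⟯ := (adjoin.powerBasis hint).basis.reindex (finCongr hdim)
  have b00 : b0 0 = 1 := by simp [b0]
  have b01 : b0 1 = AdjoinSimple.gen k α := by simp [b0]
  have hmem : ∀ x : k⟮α⟯, ((σ.restrictScalars k).toAlgHom.comp k⟮α⟯.val) x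
      ∈ k⟮α⟯.toSubalgebra := by
    have : k⟮α⟯ ≤ k⟮α⟯.comap (σ.restrictScalars k).toAlgHom := by
      rw [adjoin_simple_le_iff]
      change σ α ∈ k⟮α⟯
      rw [hσ]
      exact neg_mem (mem_adjoin_simple_self k α)
    intro x
    exact this x.2
  let τ0 : k⟮α⟯ →ₐ[k] k⟮α⟯ :=
    ((σ.restrictScalars k).toAlgHom.comp k⟮α⟯.val).codRestrict k⟮α⟯.toSubalgebra hmem
  let τ : k⟮α⟯ ≃ₐ[k] k⟮α⟯ := AlgEquiv.ofBijective τ0 (Algebra.IsAlgebraic.algHom_bijective τ0)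
  have hτ : ∀ x : k⟮α⟯, ((τ x : k⟮α⟯) : F) = σ x := fun x => rfl
  have hτg : τ (AdjoinSimple.gen k α) = - AdjoinSimple.gen k α := by
    apply Subtype.ext
    rw [hτ]
    simpa using hσ
  have hgg : AdjoinSimple.gen k α * AdjoinSimple.gen k α = algebraMap k k⟮α⟯ a := by
    apply Subtype.ext
    simpa [pow_two] using hα
  exact @norm_key_aux k k⟮α⟯ F _ _ _ _ _ _ _ B _ _
    ((Algebra.TensorProduct.map k⟮α⟯.val (AlgHom.id k B)).toRingHom).toAlgebra
    (fun l b => rfl) a b0 b00 (by rw [b01, hgg]) (σ.restrictScalars k) τ hτ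
    (by rw [b01, hτg]) w

/-- The isomorphism `Y' ≅ T_U × R_{F/k}(G_m)` in the non-split case of the proof of
Proposition 4.1 (Derenthal–Smeets–Wei): for every commutative `k`-algebra `B`, the map
`(t, w, y) ↦ ((t, (w·σ(w))⁻¹y), w)` is a bijection from the `B`-points of
`N₂(w)(t − α) = ρ·N₁(y)` onto (the `B`-points of `t − α = ρ·N₁(x)`) × (F ⊗ B)^×,
with inverse `((t, x), y) ↦ (t, y, x·y·σ(y))`. -/
theorem torsor_substitution_nonsplit_case
    (k K F : Type) [Field k] [CharZero k] [Field K] [Field F]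
    [Algebra k K] [Algebra K F] [Algebra k F] [IsScalarTower k K F]
    [FiniteDimensional k K]
    (a : k) (ha : ¬∃ x : k, x ^ 2 = a) (haK : ¬∃ x : K, x ^ 2 = algebraMap k K a)
    (α : F) (hα : α ^ 2 = algebraMap k F a)
    (htop : IntermediateField.adjoin K {α} = ⊤)
    (σ : F ≃ₐ[K] F) (hσ : σ α = -α)
    (ρ : ↥k⟮α⟯) (hρ : ρ ≠ 0)
    (B : Type) [CommRing B] [Algebra k B] :
    Set.BijOn
      (fun p : B × (F ⊗[k] B)ˣ × (F ⊗[k] B)ˣ =>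
        ((p.1, (p.2.1 * Units.map
            (Algebra.TensorProduct.congr (σ.restrictScalars k)
              (AlgEquiv.refl (A₁ := B))).toAlgHom.toRingHom.toMonoidHom p.2.1)⁻¹ *
            p.2.2), p.2.1))
      {p : B × (F ⊗[k] B)ˣ × (F ⊗[k] B)ˣ |
        ((1 : ↥k⟮α⟯) ⊗ₜ[k] Algebra.norm B (↑p.2.1 : F ⊗[k] B)) *
            (((1 : ↥k⟮α⟯) ⊗ₜ[k] p.1) - (AdjoinSimple.gen k α ⊗ₜ[k] (1 : B))) =
          (ρ ⊗ₜ[k] (1 : B)) * normTensor k F k⟮α⟯ B ↑p.2.2}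
      {q : (B × (F ⊗[k] B)ˣ) × (F ⊗[k] B)ˣ |
        ((1 : ↥k⟮α⟯) ⊗ₜ[k] q.1.1) - (AdjoinSimple.gen k α ⊗ₜ[k] (1 : B)) =
          (ρ ⊗ₜ[k] (1 : B)) * normTensor k F k⟮α⟯ B ↑q.1.2} ∧
    Set.InvOn
      (fun q : (B × (F ⊗[k] B)ˣ) × (F ⊗[k] B)ˣ =>
        (q.1.1, q.2, q.1.2 * q.2 * Units.map
          (Algebra.TensorProduct.congr (σ.restrictScalars k)
            (AlgEquiv.refl (A₁ := B))).toAlgHom.toRingHom.toMonoidHom q.2))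
      (fun p : B × (F ⊗[k] B)ˣ × (F ⊗[k] B)ˣ =>
        ((p.1, (p.2.1 * Units.map
            (Algebra.TensorProduct.congr (σ.restrictScalars k)
              (AlgEquiv.refl (A₁ := B))).toAlgHom.toRingHom.toMonoidHom p.2.1)⁻¹ *
            p.2.2), p.2.1))
      {p : B × (F ⊗[k] B)ˣ × (F ⊗[k] B)ˣ |
        ((1 : ↥k⟮α⟯) ⊗ₜ[k] Algebra.norm B (↑p.2.1 : F ⊗[k] B)) *
            (((1 : ↥k⟮α⟯) ⊗ₜ[k] p.1) - (AdjoinSimple.gen k α ⊗ₜ[k] (1 : B))) =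
          (ρ ⊗ₜ[k] (1 : B)) * normTensor k F k⟮α⟯ B ↑p.2.2}
      {q : (B × (F ⊗[k] B)ˣ) × (F ⊗[k] B)ˣ |
        ((1 : ↥k⟮α⟯) ⊗ₜ[k] q.1.1) - (AdjoinSimple.gen k α ⊗ₜ[k] (1 : B)) =
          (ρ ⊗ₜ[k] (1 : B)) * normTensor k F k⟮α⟯ B ↑q.1.2} := by
  have key := normTensor_key k K F a ha α hα σ hσ B
  generalize hS : Units.map (M := F ⊗[k] B) (N := F ⊗[k] B)
      (Algebra.TensorProduct.congr (R := k) (σ.restrictScalars k)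
      (AlgEquiv.refl (A₁ := B))).toAlgHom.toRingHom.toMonoidHom = S
  have keyU : ∀ w : (F ⊗[k] B)ˣ, normTensor k F k⟮α⟯ B ((w * S w : (F ⊗[k] B)ˣ) : F ⊗[k] B) =
      (1 : ↥k⟮α⟯) ⊗ₜ[k] Algebra.norm B (w : F ⊗[k] B) := by
    intro w
    rw [← key (w : F ⊗[k] B), ← hS]
    rfl
  have inv : Set.InvOn
      (fun q : (B × (F ⊗[k] B)ˣ) × (F ⊗[k] B)ˣ => (q.1.1, q.2, q.1.2 * q.2 * S q.2))
      (fun p : B × (F ⊗[k] B)ˣ × (F ⊗[k] B)ˣ => ((p.1, (p.2.1 * S p.2.1)⁻¹ * p.2.2), p.2.1))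
      {p : B × (F ⊗[k] B)ˣ × (F ⊗[k] B)ˣ |
        ((1 : ↥k⟮α⟯) ⊗ₜ[k] Algebra.norm B (↑p.2.1 : F ⊗[k] B)) *
            (((1 : ↥k⟮α⟯) ⊗ₜ[k] p.1) - (AdjoinSimple.gen k α ⊗ₜ[k] (1 : B))) =
          (ρ ⊗ₜ[k] (1 : B)) * normTensor k F k⟮α⟯ B ↑p.2.2}
      {q : (B × (F ⊗[k] B)ˣ) × (F ⊗[k] B)ˣ |
        ((1 : ↥k⟮α⟯) ⊗ₜ[k] q.1.1) - (AdjoinSimple.gen k α ⊗ₜ[k] (1 : B)) =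
          (ρ ⊗ₜ[k] (1 : B)) * normTensor k F k⟮α⟯ B ↑q.1.2} := by
    constructor
    · rintro ⟨t, w, y⟩ _
      simp only [Prod.mk.injEq, true_and]
      rw [mul_assoc, mul_comm, mul_inv_cancel_left]
    · rintro ⟨⟨t, x⟩, y⟩ _
      simp only [Prod.mk.injEq, true_and, and_true]
      rw [mul_assoc, mul_comm x, inv_mul_cancel_left]
  refine ⟨inv.bijOn ?_ ?_, inv⟩
  · rintro ⟨t, w, y⟩ h
    simp only [Set.mem_ofPred_eq] at h ⊢
    have hu : IsUnit (normTensor k F k⟮α⟯ B ((w * S w : (F ⊗[k] B)ˣ) : F ⊗[k] B)) :=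
      (w * S w).isUnit.map _
    rw [← keyU] at h
    refine cancel_aux (R := ↥k⟮α⟯ ⊗[k] B) (normTensor k F k⟮α⟯ B ↑(w * S w))
      (((1 : ↥k⟮α⟯) ⊗ₜ[k] t) - (AdjoinSimple.gen k α ⊗ₜ[k] (1 : B))) (ρ ⊗ₜ[k] (1 : B))
      (normTensor k F k⟮α⟯ B ↑((w * S w)⁻¹ * y)) (normTensor k F k⟮α⟯ B ↑y) hu ?_ h
    rw [← map_mul, ← Units.val_mul, mul_inv_cancel_left]
  · rintro ⟨⟨t, x⟩, y⟩ h
    simp only [Set.mem_ofPred_eq] at h ⊢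
    rw [h, mul_assoc x, mul_comm x, Units.val_mul (y * S y) x, map_mul, keyU]
    ring
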